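/- arXiv:2301.12567 — 3 statements merged into one kernel-verified Lean document; each statement's English description precedes it below -/
import Mathlib

section
/- (Absence of fourth-order resonances.) Let m ≥ -1/2, ω_j := √(j⁴ + m j²) for integers j ≥ 1, and μ := min{2√(1+m), (3/2)√(4+m)}. Then for all integers i, j ≥ 1 and all a, b ∈ {−2, 0, 2} such that either (i ≠ j and (a,b) ≠ (0,0)) or (i = j and a + b ≠ 0), one has |a·ω_i + b·ω_j| ≥ μ. -/
/-!
Write `ω_j = j √(j² + m)`. For `i ≤ j`, replacing `√(i² + m)` by the larger `√(j² + m)` gives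
`ω_j - ω_i ≥ (j - i) √(j² + m)`, so distinct frequencies differ by at least `√(1 + m)`. Since
`ω_0 = 0`, the case `i = 0` of this gap also gives `ω_j ≥ √(1 + m)`. A resonance combination is
`±2` times a single frequency, a sum of two frequencies, or a difference of two distinct ones, so
its modulus is at least `2 √(1 + m)`, with equality for `2 ω_1`.
-/

/-- Linear frequencies `ω_j = √(j⁴ + m j²)` of the hinged beam. -/
noncomputable def beamOmega (m : ℝ) (j : ℕ) : ℝ :=
  Real.sqrt ((j : ℝ) ^ 4 + m * (j : ℝ) ^ 2)

theorem mul_le_abs_mul_add_mul {R : Type*} [CommRing R] [LinearOrder R] [IsStrictOrderedRing R]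
    {a b c r x y : R} (hc : 0 ≤ c) (hx : c ≤ x) (hy : c ≤ y)
    (ha : a = 0 ∨ |a| = r) (hb : b = 0 ∨ |b| = r) (hab : a ≠ 0 ∨ b ≠ 0)
    (hxy : a + b = 0 → c ≤ |x - y|) : r * c ≤ |a * x + b * y| := by
  have abs_mul_le {d z : R} (hz : c ≤ |z|) : |d| * c ≤ |d * z| := by
    rw [abs_mul]
    gcongr
  rcases ha with rfl | rfl
  · have hbr : |b| = r := hb.resolve_left (by simpa using hab)
    simpa [hbr] using abs_mul_le (d := b) (hy.trans (le_abs_self y))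
  · rcases hb with rfl | hba
    · simpa using abs_mul_le (d := a) (hx.trans (le_abs_self x))
    · rcases abs_eq_abs.1 hba with rfl | rfl
      · rw [← mul_add]
        exact abs_mul_le ((le_add_of_le_of_nonneg hx (hc.trans hy)).trans (le_abs_self _))
      · rw [neg_mul, ← sub_eq_add_neg, ← mul_sub]
        exact abs_mul_le (hxy (add_neg_cancel a))

section Frequencies

variable (m : ℝ) {i j : ℕ}

theorem beamOmega_eq_mul_sqrt (j : ℕ) : beamOmega m j = j * √((j : ℝ) ^ 2 + m) := by
  have factor : (j : ℝ) ^ 4 + m * (j : ℝ) ^ 2 = (j : ℝ) ^ 2 * ((j : ℝ) ^ 2 + m) := by ring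
  rw [beamOmega, factor, Real.sqrt_mul (sq_nonneg _), Real.sqrt_sq j.cast_nonneg]

theorem sub_mul_sqrt_le_beamOmega_sub (hij : i ≤ j) :
    ((j : ℝ) - i) * √((j : ℝ) ^ 2 + m) ≤ beamOmega m j - beamOmega m i := by
  rw [beamOmega_eq_mul_sqrt, beamOmega_eq_mul_sqrt, sub_mul]
  gcongr

theorem sqrt_one_add_le_beamOmega_sub (hij : i < j) :
    √(1 + m) ≤ beamOmega m j - beamOmega m i := by
  have one_le_sub : (1 : ℝ) ≤ j - i := by
    rw [le_sub_iff_add_le']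
    exact_mod_cast hij
  have one_le_sq : (1 : ℝ) ≤ (j : ℝ) ^ 2 := one_le_pow₀ (by exact_mod_cast Nat.one_le_of_lt hij)
  calc √(1 + m) ≤ √((j : ℝ) ^ 2 + m) := by gcongr
    _ ≤ (j - i) * √((j : ℝ) ^ 2 + m) := le_mul_of_one_le_left (Real.sqrt_nonneg _) one_le_sub
    _ ≤ beamOmega m j - beamOmega m i := sub_mul_sqrt_le_beamOmega_sub m hij.le

theorem sqrt_one_add_le_beamOmega (hj : 1 ≤ j) : √(1 + m) ≤ beamOmega m j := by
  simpa [beamOmega_eq_mul_sqrt m 0] using sqrt_one_add_le_beamOmega_sub m hj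

theorem sqrt_one_add_le_abs_beamOmega_sub (hij : i ≠ j) :
    √(1 + m) ≤ |beamOmega m i - beamOmega m j| := by
  rcases hij.lt_or_gt with hlt | hgt
  · rw [abs_sub_comm]
    exact (sqrt_one_add_le_beamOmega_sub m hlt).trans (le_abs_self _)
  · exact (sqrt_one_add_le_beamOmega_sub m hgt).trans (le_abs_self _)

end Frequencies

theorem no_fourth_order_resonances_general
    (m : ℝ) (_hm : -1 ≤ m) (i j : ℕ) (hi : 1 ≤ i) (hj : 1 ≤ j)
    (a b : ℝ) (ha : a ∈ ({-2, 0, 2} : Set ℝ)) (hb : b ∈ ({-2, 0, 2} : Set ℝ))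
    (hres : (i ≠ j ∧ (a, b) ≠ (0, 0)) ∨ (i = j ∧ a + b ≠ 0)) :
    2 * √(1 + m) ≤ |a * beamOmega m i + b * beamOmega m j| := by
  have eq_zero_or_abs_eq_two {d : ℝ} (hd : d ∈ ({-2, 0, 2} : Set ℝ)) : d = 0 ∨ |d| = 2 := by
    rcases hd with rfl | rfl | rfl <;> simp
  have coeff_ne_zero : a ≠ 0 ∨ b ≠ 0 := by
    by_contra! h
    simp [h] at hres
  have ne_of_add_eq_zero (hab : a + b = 0) : i ≠ j :=
    hres.elim And.left fun h ↦ absurd hab h.2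
  exact mul_le_abs_mul_add_mul (Real.sqrt_nonneg _)
    (sqrt_one_add_le_beamOmega m hi) (sqrt_one_add_le_beamOmega m hj)
    (eq_zero_or_abs_eq_two ha) (eq_zero_or_abs_eq_two hb) coeff_ne_zero
    fun hab ↦ sqrt_one_add_le_abs_beamOmega_sub m (ne_of_add_eq_zero hab)

/-- **Absence of fourth-order resonances.** -/
theorem no_fourth_order_resonances
    (m : ℝ) (hm : -(1/2) ≤ m)
    (μ : ℝ) (hμ : μ = min (2 * Real.sqrt (1 + m)) (3/2 * Real.sqrt (4 + m)))
    (i j : ℕ) (hi : 1 ≤ i) (hj : 1 ≤ j)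
    (a b : ℝ) (ha : a ∈ ({-2, 0, 2} : Set ℝ)) (hb : b ∈ ({-2, 0, 2} : Set ℝ))
    (hres : (i ≠ j ∧ (a, b) ≠ (0, 0)) ∨ (i = j ∧ a + b ≠ 0)) :
    μ ≤ |a * beamOmega m i + b * beamOmega m j| :=
  (hμ.trans_le (min_le_left _ _)).trans
    (no_fourth_order_resonances_general m (by linarith) i j hi hj a b ha hb hres)
end

section
/- (Absence of sixth-order resonances.) Let −1/2 ≤ m ≤ 1 and ω_j := √(j⁴ + m j²) for integers j ≥ 1. Then for all integers i, j, k ≥ 1 and all a, b, c ∈ {−2, 0, 2}, if a·ω_i + b·ω_j + c·ω_k ≠ 0 then |a·ω_i + b·ω_j + c·ω_k| ≥ (7/8)·|m|. -/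
-- `-4/5` is a rational upper bound for the negative root `2 - 2√2` of `1 + x - x²/4`.
theorem one_add_half_sub_sq_le_sqrt_one_add {x : ℝ} (hx : -(4 / 5) ≤ x) :
    1 + x / 2 - x ^ 2 / 4 ≤ √(1 + x) := by
  rcases le_total x 4 with hx4 | hx4
  · refine Real.le_sqrt_of_sq_le ?_
    have hfactor : 0 ≤ 1 + x - x ^ 2 / 4 := by nlinarith
    calc (1 + x / 2 - x ^ 2 / 4) ^ 2 = 1 + x - x ^ 2 / 4 * (1 + x - x ^ 2 / 4) := by ring
      _ ≤ 1 + x := sub_le_self _ (by positivity)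
  · calc 1 + x / 2 - x ^ 2 / 4 ≤ 0 := by nlinarith
      _ ≤ √(1 + x) := Real.sqrt_nonneg _

theorem three_le_of_sq_add_sq_eq_sq {i j k : ℕ} (hi : 1 ≤ i) (hj : 1 ≤ j)
    (h : i ^ 2 + j ^ 2 = k ^ 2) : 3 ≤ i := by
  by_contra! hi3
  have hjk : j < k := by nlinarith
  have hkj : k < j + 2 := by nlinarith
  obtain rfl : k = j + 1 := by omega
  have hodd : i ^ 2 = 2 * j + 1 := by linarith
  interval_cases i <;> omega

section SignCombinations

variable {t x y z : ℝ}

theorem le_abs_sign_mul_add_sign_mul (ht : 0 ≤ t) (hx : t ≤ x) (hy : t ≤ y)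
    (hxy : x ≠ y → t ≤ |x - y|) (σ τ : SignType) (hne : (σ * x + τ * y : ℝ) ≠ 0) :
    t ≤ |σ * x + τ * y| := by
  have hsum : t ≤ |x + y| := (by linarith : t ≤ x + y).trans (le_abs_self _)
  rw [le_abs] at *
  rcases σ.trichotomy with rfl | rfl | rfl <;> rcases τ.trichotomy with rfl | rfl | rfl <;>
    simp only [SignType.coe_neg_one, SignType.coe_zero, SignType.coe_one] at hne ⊢ <;> grind

theorem le_abs_sign_mul_add_sign_mul_add_sign_mul (ht : 0 ≤ t)
    (hx : t ≤ x) (hy : t ≤ y) (hz : t ≤ z)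
    (hxyz : t ≤ |x + y - z|) (hxzy : t ≤ |x + z - y|) (hyzx : t ≤ |y + z - x|)
    {σ τ υ : SignType} (hσ : σ ≠ 0) (hτ : τ ≠ 0) (hυ : υ ≠ 0) :
    t ≤ |σ * x + τ * y + υ * z| := by
  have hsum : t ≤ |x + y + z| := (by linarith : t ≤ x + y + z).trans (le_abs_self _)
  rw [le_abs] at *
  have eq_one_or_neg_one : ∀ s : SignType, s ≠ 0 → s = 1 ∨ s = -1 := by decide
  -- Up to a global sign at most one coefficient is negative.
  rcases eq_one_or_neg_one σ hσ with rfl | rfl <;>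
    rcases eq_one_or_neg_one τ hτ with rfl | rfl <;>
    rcases eq_one_or_neg_one υ hυ with rfl | rfl <;>
    simp only [SignType.coe_neg_one, SignType.coe_one] <;> grind

end SignCombinations

theorem beamOmega_eq_sq_mul_sqrt (m : ℝ) {j : ℕ} (hj : 1 ≤ j) :
    beamOmega m j = (j : ℝ) ^ 2 * √(1 + m / (j : ℝ) ^ 2) := by
  have : (0 : ℝ) < j := by exact_mod_cast hj
  have hfactor : (j : ℝ) ^ 4 + m * (j : ℝ) ^ 2 = ((j : ℝ) ^ 2) ^ 2 * (1 + m / (j : ℝ) ^ 2) := by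
    field_simp
  rw [beamOmega, hfactor, Real.sqrt_mul (by positivity), Real.sqrt_sq (by positivity)]

theorem le_div_sq_of_le {m r : ℝ} (hr : r ≤ 0) (hm : r ≤ m) {j : ℕ} (hj : 1 ≤ j) :
    r ≤ m / (j : ℝ) ^ 2 := by
  have hj1 : (1 : ℝ) ≤ (j : ℝ) ^ 2 := by exact_mod_cast Nat.one_le_pow 2 j hj
  rw [le_div_iff₀ (by linarith)]
  nlinarith

theorem beamOmega_le_sq_add_half {m : ℝ} (hm : -1 ≤ m) {j : ℕ} (hj : 1 ≤ j) :
    beamOmega m j ≤ (j : ℝ) ^ 2 + m / 2 := by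
  have : (0 : ℝ) < j := by exact_mod_cast hj
  rw [beamOmega_eq_sq_mul_sqrt m hj]
  calc (j : ℝ) ^ 2 * √(1 + m / (j : ℝ) ^ 2)
      ≤ (j : ℝ) ^ 2 * (1 + m / (j : ℝ) ^ 2 / 2) := by
        gcongr
        exact Real.sqrt_one_add_le (le_div_sq_of_le (by norm_num) hm hj)
    _ = (j : ℝ) ^ 2 + m / 2 := by field_simp

theorem sq_add_half_sub_le_beamOmega {m : ℝ} (hm : -(4 / 5) ≤ m) {j n : ℕ} (hn : 1 ≤ n)
    (hnj : n ≤ j) :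
    (j : ℝ) ^ 2 + m / 2 - m ^ 2 / (4 * (n : ℝ) ^ 2) ≤ beamOmega m j := by
  have hj : 1 ≤ j := hn.trans hnj
  have : (0 : ℝ) < n := by exact_mod_cast hn
  have : (0 : ℝ) < j := by exact_mod_cast hj
  rw [beamOmega_eq_sq_mul_sqrt m hj]
  calc (j : ℝ) ^ 2 + m / 2 - m ^ 2 / (4 * (n : ℝ) ^ 2)
      ≤ (j : ℝ) ^ 2 + m / 2 - m ^ 2 / (4 * (j : ℝ) ^ 2) := by gcongr
    _ = (j : ℝ) ^ 2 * (1 + m / (j : ℝ) ^ 2 / 2 - (m / (j : ℝ) ^ 2) ^ 2 / 4) := by field_simp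
    _ ≤ (j : ℝ) ^ 2 * √(1 + m / (j : ℝ) ^ 2) := by
        gcongr
        exact one_add_half_sub_sq_le_sqrt_one_add (le_div_sq_of_le (by norm_num) hm hj)

section Gaps

variable {m : ℝ} {i j k : ℕ}

theorem mul_abs_le_beamOmega (hm : -(3 / 4) ≤ m) (hm1 : m ≤ 1) (hj : 1 ≤ j) :
    7 / 16 * |m| ≤ beamOmega m j := by
  have hj1 : (1 : ℝ) ≤ (j : ℝ) ^ 2 := by exact_mod_cast Nat.one_le_pow 2 j hj
  have hlower := sq_add_half_sub_le_beamOmega (m := m) (by linarith) le_rfl hj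
  calc 7 / 16 * |m| ≤ 1 + m / 2 - m ^ 2 / 4 := by cases abs_cases m <;> nlinarith
    _ ≤ beamOmega m j := by norm_num at hlower; linarith

theorem mul_abs_le_beamOmega_sub_of_lt (hm : -(3 / 4) ≤ m) (hm1 : m ≤ 1)
    (hi : 1 ≤ i) (hij : i < j) :
    7 / 16 * |m| ≤ beamOmega m j - beamOmega m i := by
  have hsq : (i : ℝ) ^ 2 + 3 ≤ (j : ℝ) ^ 2 := by
    have : i ^ 2 + 3 ≤ j ^ 2 := by nlinarith
    exact_mod_cast this
  have hlower := sq_add_half_sub_le_beamOmega (m := m) (by linarith) le_rfl (hi.trans hij.le)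
  have hupper := beamOmega_le_sq_add_half (m := m) (by linarith) hi
  calc 7 / 16 * |m| ≤ 3 - m ^ 2 / 4 := by cases abs_cases m <;> nlinarith
    _ ≤ beamOmega m j - beamOmega m i := by norm_num at hlower; linarith

theorem mul_abs_le_abs_beamOmega_sub (hm : -(3 / 4) ≤ m) (hm1 : m ≤ 1) (hi : 1 ≤ i) (hj : 1 ≤ j)
    (hne : beamOmega m i ≠ beamOmega m j) :
    7 / 16 * |m| ≤ |beamOmega m i - beamOmega m j| := by
  rcases lt_trichotomy i j with hij | rfl | hji
  · rw [abs_sub_comm]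
    exact (mul_abs_le_beamOmega_sub_of_lt hm hm1 hi hij).trans (le_abs_self _)
  · exact absurd rfl hne
  · exact (mul_abs_le_beamOmega_sub_of_lt hm hm1 hj hji).trans (le_abs_self _)

theorem mul_abs_le_beamOmega_sub_add_of_sq_add_sq_lt (hm : -(3 / 4) ≤ m) (hm1 : m ≤ 1)
    (hi : 1 ≤ i) (hj : 1 ≤ j) (h : i ^ 2 + j ^ 2 < k ^ 2) :
    7 / 16 * |m| ≤ beamOmega m k - (beamOmega m i + beamOmega m j) := by
  have hsq : (i : ℝ) ^ 2 + (j : ℝ) ^ 2 + 1 ≤ (k : ℝ) ^ 2 := by exact_mod_cast h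
  have hk : 2 ≤ k := by nlinarith
  have hlower := sq_add_half_sub_le_beamOmega (m := m) (by linarith) one_le_two hk
  have hupper_i := beamOmega_le_sq_add_half (m := m) (by linarith) hi
  have hupper_j := beamOmega_le_sq_add_half (m := m) (by linarith) hj
  calc 7 / 16 * |m| ≤ 1 - m / 2 - m ^ 2 / 16 := by cases abs_cases m <;> nlinarith
    _ ≤ beamOmega m k - (beamOmega m i + beamOmega m j) := by norm_num at hlower; linarith

theorem mul_abs_le_beamOmega_add_sub_of_lt_sq_add_sq (hm : -(3 / 4) ≤ m) (hm1 : m ≤ 1)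
    (hi : 1 ≤ i) (hj : 1 ≤ j) (hk : 1 ≤ k) (h : k ^ 2 < i ^ 2 + j ^ 2) :
    7 / 16 * |m| ≤ beamOmega m i + beamOmega m j - beamOmega m k := by
  have hsq : (k : ℝ) ^ 2 + 1 ≤ (i : ℝ) ^ 2 + (j : ℝ) ^ 2 := by exact_mod_cast h
  have hlower_i := sq_add_half_sub_le_beamOmega (m := m) (by linarith) le_rfl hi
  have hlower_j := sq_add_half_sub_le_beamOmega (m := m) (by linarith) le_rfl hj
  have hupper := beamOmega_le_sq_add_half (m := m) (by linarith) hk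
  calc 7 / 16 * |m| ≤ 1 + m / 2 - m ^ 2 / 2 := by cases abs_cases m <;> nlinarith
    _ ≤ beamOmega m i + beamOmega m j - beamOmega m k := by
        norm_num at hlower_i hlower_j; linarith

theorem mul_abs_le_abs_beamOmega_add_sub_of_sq_add_sq_eq (hm : -(3 / 4) ≤ m) (hm1 : m ≤ 1)
    (hi : 1 ≤ i) (hj : 1 ≤ j) (h : i ^ 2 + j ^ 2 = k ^ 2) :
    7 / 16 * |m| ≤ |beamOmega m i + beamOmega m j - beamOmega m k| := by
  have hsq : (i : ℝ) ^ 2 + (j : ℝ) ^ 2 = (k : ℝ) ^ 2 := by exact_mod_cast h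
  have hi3 : 3 ≤ i := three_le_of_sq_add_sq_eq_sq hi hj h
  have hj3 : 3 ≤ j := three_le_of_sq_add_sq_eq_sq hj hi (by rwa [add_comm])
  have hk3 : 3 ≤ k := by nlinarith
  rcases le_total 0 m with h0 | h0
  · have hlower_i := sq_add_half_sub_le_beamOmega (m := m) (by linarith) (by norm_num) hi3
    have hlower_j := sq_add_half_sub_le_beamOmega (m := m) (by linarith) (by norm_num) hj3
    have hupper := beamOmega_le_sq_add_half (m := m) (by linarith) (by omega : 1 ≤ k)
    calc 7 / 16 * |m| ≤ m / 2 - m ^ 2 / 18 := by rw [abs_of_nonneg h0]; nlinarith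
      _ ≤ beamOmega m i + beamOmega m j - beamOmega m k := by
          norm_num at hlower_i hlower_j; linarith
      _ ≤ |beamOmega m i + beamOmega m j - beamOmega m k| := le_abs_self _
  · have hlower := sq_add_half_sub_le_beamOmega (m := m) (by linarith) (by norm_num) hk3
    have hupper_i := beamOmega_le_sq_add_half (m := m) (by linarith) hi
    have hupper_j := beamOmega_le_sq_add_half (m := m) (by linarith) hj
    calc 7 / 16 * |m| ≤ -m / 2 - m ^ 2 / 36 := by rw [abs_of_nonpos h0]; nlinarith
      _ ≤ -(beamOmega m i + beamOmega m j - beamOmega m k) := by norm_num at hlower; linarith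
      _ ≤ |beamOmega m i + beamOmega m j - beamOmega m k| := neg_le_abs _

theorem mul_abs_le_abs_beamOmega_add_sub (hm : -(3 / 4) ≤ m) (hm1 : m ≤ 1)
    (hi : 1 ≤ i) (hj : 1 ≤ j) (hk : 1 ≤ k) :
    7 / 16 * |m| ≤ |beamOmega m i + beamOmega m j - beamOmega m k| := by
  rcases lt_trichotomy (i ^ 2 + j ^ 2) (k ^ 2) with hlt | heq | hgt
  · rw [abs_sub_comm]
    exact (mul_abs_le_beamOmega_sub_add_of_sq_add_sq_lt hm hm1 hi hj hlt).trans (le_abs_self _)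
  · exact mul_abs_le_abs_beamOmega_add_sub_of_sq_add_sq_eq hm hm1 hi hj heq
  · exact (mul_abs_le_beamOmega_add_sub_of_lt_sq_add_sq hm hm1 hi hj hk hgt).trans (le_abs_self _)

theorem mul_abs_le_abs_sign_mul_beamOmega (hm : -(3 / 4) ≤ m) (hm1 : m ≤ 1)
    (hi : 1 ≤ i) (hj : 1 ≤ j) (hk : 1 ≤ k) (σ τ υ : SignType)
    (hne : σ * beamOmega m i + τ * beamOmega m j + υ * beamOmega m k ≠ 0) :
    7 / 16 * |m| ≤ |σ * beamOmega m i + τ * beamOmega m j + υ * beamOmega m k| := by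
  have ht : 0 ≤ 7 / 16 * |m| := by positivity
  have single {n : ℕ} (hn : 1 ≤ n) := mul_abs_le_beamOmega hm hm1 hn
  have pair {p q : ℕ} (hp : 1 ≤ p) (hq : 1 ≤ q) :=
    le_abs_sign_mul_add_sign_mul ht (single hp) (single hq)
      (mul_abs_le_abs_beamOmega_sub hm hm1 hp hq)
  by_cases hσ : σ = 0
  · simpa [hσ] using pair hj hk τ υ (by simpa [hσ] using hne)
  by_cases hτ : τ = 0
  · simpa [hτ] using pair hi hk σ υ (by simpa [hτ] using hne)
  by_cases hυ : υ = 0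
  · simpa [hυ] using pair hi hj σ τ (by simpa [hυ] using hne)
  exact le_abs_sign_mul_add_sign_mul_add_sign_mul ht (single hi) (single hj) (single hk)
    (mul_abs_le_abs_beamOmega_add_sub hm hm1 hi hj hk)
    (mul_abs_le_abs_beamOmega_add_sub hm hm1 hi hk hj)
    (mul_abs_le_abs_beamOmega_add_sub hm hm1 hj hk hi) hσ hτ hυ

end Gaps

theorem exists_eq_two_mul_sign {a : ℝ} (ha : a ∈ ({-2, 0, 2} : Set ℝ)) :
    ∃ σ : SignType, a = 2 * σ := by
  rcases ha with rfl | rfl | rfl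
  exacts [⟨-1, by simp⟩, ⟨0, by simp⟩, ⟨1, by simp⟩]

theorem no_sixth_order_resonances_general
    (m : ℝ) (hm : -(3 / 4) ≤ m) (hm1 : m ≤ 1)
    (i j k : ℕ) (hi : 1 ≤ i) (hj : 1 ≤ j) (hk : 1 ≤ k)
    (a b c : ℝ) (ha : a ∈ ({-2, 0, 2} : Set ℝ)) (hb : b ∈ ({-2, 0, 2} : Set ℝ))
    (hc : c ∈ ({-2, 0, 2} : Set ℝ))
    (hres : a * beamOmega m i + b * beamOmega m j + c * beamOmega m k ≠ 0) :
    7 / 8 * |m| ≤ |a * beamOmega m i + b * beamOmega m j + c * beamOmega m k| := by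
  obtain ⟨σ, rfl⟩ := exists_eq_two_mul_sign ha
  obtain ⟨τ, rfl⟩ := exists_eq_two_mul_sign hb
  obtain ⟨υ, rfl⟩ := exists_eq_two_mul_sign hc
  simp only [mul_assoc, ← mul_add] at hres ⊢
  have hgap := mul_abs_le_abs_sign_mul_beamOmega hm hm1 hi hj hk σ τ υ (right_ne_zero_of_mul hres)
  rw [abs_mul, abs_two]
  linarith

/-- **Absence of sixth-order resonances.** -/
theorem no_sixth_order_resonances
    (m : ℝ) (hm : -(1/2) ≤ m) (hm1 : m ≤ 1)
    (i j k : ℕ) (hi : 1 ≤ i) (hj : 1 ≤ j) (hk : 1 ≤ k)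
    (a b c : ℝ) (ha : a ∈ ({-2, 0, 2} : Set ℝ)) (hb : b ∈ ({-2, 0, 2} : Set ℝ))
    (hc : c ∈ ({-2, 0, 2} : Set ℝ))
    (hres : a * beamOmega m i + b * beamOmega m j + c * beamOmega m k ≠ 0) :
    7/8 * |m| ≤ |a * beamOmega m i + b * beamOmega m j + c * beamOmega m k| :=
  no_sixth_order_resonances_general m (by linarith) hm1 i j k hi hj hk a b c ha hb hc hres
end

section
/- Let 0 ≤ m ≤ 1 and ω_j := √(j⁴ + m j²) for integers j ≥ 1. Then for all integers i, j, k with 2 ≤ i ≤ j < k, one has |ω_i + ω_j − ω_k| ≥ (7/16)·m. -/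
section SqrtBounds

variable {x m : ℝ}

lemma sqrt_sq_add_mul_le (h : 0 ≤ x + m / 2) : √(x ^ 2 + m * x) ≤ x + m / 2 :=
  Real.sqrt_le_iff.mpr ⟨h, by linarith [sq_nonneg m]⟩

lemma le_sqrt_sq_add_mul (hx : 0 < x) (hm : 0 ≤ m) :
    x + m / 2 - m ^ 2 / (8 * x) ≤ √(x ^ 2 + m * x) := by
  have hmx : 0 ≤ m * x := mul_nonneg hm hx.le
  set s := √(x ^ 2 + m * x)
  have hs : s ^ 2 = x ^ 2 + m * x := Real.sq_sqrt (by positivity)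
  have hxs : 0 ≤ s - x := sub_nonneg.mpr (Real.le_sqrt_of_sq_le (by linarith))
  have hm_eq : m = (s ^ 2 - x ^ 2) / x := by
    rw [hs]
    field_simp
    ring
  have remainder_eq :
      s - (x + m / 2 - m ^ 2 / (8 * x)) = (s - x) ^ 3 * (s + 3 * x) / (8 * x ^ 3) := by
    rw [hm_eq]
    field_simp
    ring
  have remainder_nonneg : 0 ≤ (s - x) ^ 3 * (s + 3 * x) / (8 * x ^ 3) := by positivity
  linarith

end SqrtBounds

section Frequencies

variable {m : ℝ} {i j k : ℕ}

lemma beamOmega_eq_sqrt_sq_add_mul (m : ℝ) (j : ℕ) :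
    beamOmega m j = √(((j : ℝ) ^ 2) ^ 2 + m * (j : ℝ) ^ 2) := by
  rw [beamOmega, ← pow_mul]

lemma beamOmega_le (hm : 0 ≤ m) (j : ℕ) : beamOmega m j ≤ (j : ℝ) ^ 2 + m / 2 := by
  rw [beamOmega_eq_sqrt_sq_add_mul]
  exact sqrt_sq_add_mul_le (by positivity)

lemma le_beamOmega (hm : 0 ≤ m) (hj : 0 < j) :
    (j : ℝ) ^ 2 + m / 2 - m ^ 2 / (8 * (j : ℝ) ^ 2) ≤ beamOmega m j := by
  rw [beamOmega_eq_sqrt_sq_add_mul]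
  exact le_sqrt_sq_add_mul (by positivity) hm

lemma le_beamOmega_add_sub (hm : 0 ≤ m) (hi : 0 < i) (hj : 0 < j) (h : k ^ 2 ≤ i ^ 2 + j ^ 2) :
    m / 2 - m ^ 2 / (8 * (i : ℝ) ^ 2) - m ^ 2 / (8 * (j : ℝ) ^ 2) ≤
      beamOmega m i + beamOmega m j - beamOmega m k := by
  have hsq : (k : ℝ) ^ 2 ≤ (i : ℝ) ^ 2 + (j : ℝ) ^ 2 := by exact_mod_cast h
  linarith [le_beamOmega hm hi, le_beamOmega hm hj, beamOmega_le hm k]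

lemma le_beamOmega_sub_add (hm : 0 ≤ m) (h : i ^ 2 + j ^ 2 < k ^ 2) :
    1 - m / 2 - m ^ 2 / (8 * (k : ℝ) ^ 2) ≤
      beamOmega m k - (beamOmega m i + beamOmega m j) := by
  have hk : 0 < k := Nat.pos_of_ne_zero (by rintro rfl; simp at h)
  have hsq : (i : ℝ) ^ 2 + (j : ℝ) ^ 2 + 1 ≤ (k : ℝ) ^ 2 := by exact_mod_cast h
  linarith [beamOmega_le hm i, beamOmega_le hm j, le_beamOmega hm hk]

lemma sq_div_eight_mul_sq_le (hm0 : 0 ≤ m) (hm1 : m ≤ 1) (hj : 2 ≤ j) :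
    m ^ 2 / (8 * (j : ℝ) ^ 2) ≤ m / 32 := by
  have hj_real : (2 : ℝ) ≤ j := by exact_mod_cast hj
  have hm_sq : m ^ 2 ≤ m := pow_le_of_le_one hm0 hm1 two_ne_zero
  have h_denom : (32 : ℝ) ≤ 8 * (j : ℝ) ^ 2 := by nlinarith
  exact div_le_div₀ hm0 hm_sq (by norm_num) h_denom

end Frequencies

theorem beam_sixth_order_nonresonance_pos_general {m : ℝ} (hm0 : 0 ≤ m) (hm1 : m ≤ 1)
    {i j : ℕ} (hi : 0 < i) (hj : 0 < j) (k : ℕ) :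
    m / 2 - m ^ 2 / (8 * (i : ℝ) ^ 2) - m ^ 2 / (8 * (j : ℝ) ^ 2) ≤
      |beamOmega m i + beamOmega m j - beamOmega m k| := by
  rcases le_or_gt (k ^ 2) (i ^ 2 + j ^ 2) with h | h
  · exact (le_beamOmega_add_sub hm0 hi hj h).trans (le_abs_self _)
  · have hik : i ≤ k := (Nat.pow_le_pow_iff_left two_ne_zero).mp (by omega)
    have remainder_le : m ^ 2 / (8 * (k : ℝ) ^ 2) ≤ m ^ 2 / (8 * (i : ℝ) ^ 2) := by gcongr
    have remainder_nonneg : 0 ≤ m ^ 2 / (8 * (j : ℝ) ^ 2) := by positivity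
    rw [abs_sub_comm]
    refine le_trans ?_ (le_abs_self _)
    linarith [le_beamOmega_sub_add hm0 h]

/-- Lower bound `|ω_i + ω_j - ω_k| ≥ (7/16)·m` for `2 ≤ i ≤ j < k` and `0 ≤ m ≤ 1`. -/
theorem beam_sixth_order_nonresonance_pos
    (m : ℝ) (hm0 : 0 ≤ m) (hm1 : m ≤ 1)
    (i j k : ℕ) (hi : 2 ≤ i) (hij : i ≤ j) (hjk : j < k) :
    7/16 * m ≤ |beamOmega m i + beamOmega m j - beamOmega m k| := by
  have hj : 2 ≤ j := hi.trans hij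
  have lower_bound := beam_sixth_order_nonresonance_pos_general hm0 hm1
    (two_pos.trans_le hi) (two_pos.trans_le hj) k
  linarith [sq_div_eight_mul_sq_le hm0 hm1 hi, sq_div_eight_mul_sq_le hm0 hm1 hj]
end
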